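/- For every n ≥ 0 and all i_1, i_2, i_3 ∈ {0,1} such that the word i_1^{(n)} i_2^{(n)} i_3^{(n)} is a factor of ω, one has φ(i_1^{(n)} i_2^{(n)} i_3^{(n)}) = 1/(6·2^n). -/

import Mathlib

/-- One-sided Thue–Morse sequence: parity of the binary digit sum. -/
def tm (n : ℕ) : ℕ := (Nat.digits 2 n).sum % 2

/-- Two-sided Thue–Morse sequence `ω : ℤ → {0,1}`. -/
def tmZ (n : ℤ) : ℕ := if 0 ≤ n then tm n.toNat else tm (-n - 1).toNat

/-- The block `ω_[m, m+k-1]` of the two-sided Thue–Morse sequence. -/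
def tmBlock (m : ℤ) (k : ℕ) : List ℕ := (List.range k).map fun j => tmZ (m + j)

/-- A (nonempty) word is a factor of the two-sided Thue–Morse sequence. -/
def IsFactor (α : List ℕ) : Prop := α ≠ [] ∧ ∃ m : ℤ, α = tmBlock m α.length

/-- The words `i⁽ⁿ⁾`: `blk i 0 = [i]`, `blk i (n+1) = blk i n ++ blk (1-i) n`. -/
def blk : ℕ → ℕ → List ℕ
  | i, 0 => [i]
  | i, n + 1 => blk i n ++ blk (1 - i) n

theorem tm_even (n : ℕ) : tm (2 * n) = tm n := by
  rcases Nat.eq_zero_or_pos n with h | h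
  · subst h; rfl
  · unfold tm
    rw [Nat.digits_def' (by norm_num) (by omega)]
    simp

theorem tm_lt (n : ℕ) : tm n < 2 := Nat.mod_lt _ (by norm_num)

theorem tm_odd (n : ℕ) : tm (2 * n + 1) = 1 - tm n := by
  unfold tm
  rw [Nat.digits_def' (by norm_num) (by omega)]
  have h1 : (2 * n + 1) % 2 = 1 := by omega
  have h2 : (2 * n + 1) / 2 = n := by omega
  rw [h1, h2, List.sum_cons]
  omega

theorem tm_zero : tm 0 = 0 := by simp [tm]

theorem tm_four (n r : ℕ) (hr : r < 4) :
    tm (4 * n + r) = if r = 0 ∨ r = 3 then tm n else 1 - tm n := by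
  have h := tm_lt n
  have e0 := tm_even (2 * n)
  have e1 := tm_odd (2 * n)
  have e2 := tm_even (2 * n + 1)
  have e3 := tm_odd (2 * n + 1)
  have f0 := tm_even n
  have f1 := tm_odd n
  ring_nf at *
  interval_cases r <;> ring_nf at * <;> simp <;> omega

theorem tmZ_four (q : ℤ) (r : ℕ) (hr : r < 4) :
    tmZ (4 * q + r) = if r = 0 ∨ r = 3 then tmZ q else 1 - tmZ q := by
  unfold tmZ
  by_cases h : 0 ≤ q
  · rw [if_pos h, if_pos (by omega), show (4 * q + r).toNat = 4 * q.toNat + r by omega,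
      tm_four _ _ hr]
  · rw [if_neg h, if_neg (by omega),
      show (-(4 * q + r) - 1).toNat = 4 * (-q - 1).toNat + (3 - r) by omega,
      tm_four _ _ (by omega)]
    congr 1
    apply propext
    omega

theorem tmZ_eq (k : ℕ) : ∀ m : ℤ, -4 ^ k ≤ m → m < 4 ^ k →
    tmZ m = tm (6 * 4 ^ k + m).toNat := by
  induction k with
  | zero =>
    intro m h1 h2
    have : m = -1 ∨ m = 0 := by simp at h1 h2; omega
    rcases this with rfl | rfl <;> simp [tmZ, tm]
  | succ k ih =>
    intro m h1 h2
    rw [pow_succ] at *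
    obtain ⟨q, r, hr, rfl⟩ : ∃ (q : ℤ) (r : ℕ), r < 4 ∧ m = 4 * q + r :=
      ⟨m / 4, (m % 4).toNat, by omega, by omega⟩
    have h3 : -4 ^ k ≤ q := by omega
    rw [tmZ_four q r hr, ih q h3 (by omega),
      show (6 * (4 ^ k * 4) + (4 * q + (r : ℤ))).toNat = 4 * (6 * 4 ^ k + q).toNat + r by omega,
      tm_four _ _ hr]

/-- the word occurs in the one-sided sequence at position `m` -/
def At : List ℕ → ℕ → Prop
  | [], _ => True
  | a :: l, m => tm m = a ∧ At l (m + 1)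

theorem At_iff (α : List ℕ) : ∀ m : ℕ,
    At α m ↔ α = (List.range α.length).map fun j => tm (m + j) := by
  induction α with
  | nil => intro m; simp [At]
  | cons a l ih =>
    intro m
    simp only [At, ih, List.length_cons, List.range_succ_eq_map, List.map_cons, List.map_map,
      List.cons.injEq]
    have : ((fun j => tm (m + j)) ∘ Nat.succ) = fun j => tm (m + 1 + j) := by
      funext j; simp only [Function.comp]; congr 1; omega
    rw [this, eq_comm (a := a)]
    exact Iff.rfl

theorem tmBlock_eq (m : ℤ) (k : ℕ) :
    tmBlock m k = (List.range k).map fun j : ℕ => tmZ (m + (j : ℤ)) := by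
  unfold tmBlock
  have : (do let a ← List.range k; pure (a : ℤ) : List ℤ) =
      (List.range k).map fun j : ℕ => (j : ℤ) := by
    simp [List.map_eq_flatMap]
  rw [this, List.map_map]
  rfl

theorem isFactor_iff (α : List ℕ) : IsFactor α ↔ α ≠ [] ∧ ∃ m, At α m := by
  unfold IsFactor
  refine and_congr_right fun _ => ⟨?_, ?_⟩
  · rintro ⟨m, hm⟩
    obtain ⟨k, hk⟩ : ∃ k : ℕ, m.natAbs + α.length < 4 ^ k :=
      ⟨_, Nat.lt_pow_self (by norm_num)⟩
    have hk' : (m.natAbs : ℤ) + α.length < 4 ^ k := by exact_mod_cast hk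
    refine ⟨(6 * 4 ^ k + m).toNat, (At_iff _ _).2 ?_⟩
    conv_lhs => rw [hm]
    rw [tmBlock_eq]
    apply List.map_congr_left
    intro j hj
    rw [List.mem_range] at hj
    rw [tmZ_eq k _ (by omega) (by omega)]
    congr 1
    omega
  · rintro ⟨m, hm⟩
    refine ⟨m, ?_⟩
    rw [At_iff] at hm
    conv_lhs => rw [hm]
    rw [tmBlock_eq]
    apply List.map_congr_left
    intro j hj
    unfold tmZ
    rw [if_pos (by omega)]
    congr 1

theorem fac_cons (i : ℕ) (α : List ℕ) : IsFactor (i :: α) ↔ ∃ m, tm m = i ∧ At α (m + 1) := by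
  simp [isFactor_iff, At]

theorem fac_tail {i : ℕ} {α : List ℕ} (h : IsFactor (i :: α)) (h' : α ≠ []) : IsFactor α := by
  obtain ⟨m, _, h⟩ := (fac_cons _ _).1 h
  exact (isFactor_iff _).2 ⟨h', _, h⟩

/-- the Thue–Morse substitution -/
def sg : List ℕ → List ℕ
  | [] => []
  | a :: l => a :: (1 - a) :: sg l

theorem sg_append (l l' : List ℕ) : sg (l ++ l') = sg l ++ sg l' := by
  induction l with
  | nil => rfl
  | cons a l ih => simp [sg, ih]

theorem sg_length (l : List ℕ) : (sg l).length = 2 * l.length := by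
  induction l with
  | nil => rfl
  | cons a l ih => simp [sg, ih]; ring

theorem blk_succ (n : ℕ) : ∀ i, blk i (n + 1) = sg (blk i n) := by
  induction n with
  | zero => intro i; rfl
  | succ n ih =>
    intro i
    conv_lhs => rw [blk]
    rw [ih, ih, ← sg_append, ← ih, blk]

theorem blk_length (n : ℕ) : ∀ i, (blk i n).length = 2 ^ n := by
  induction n with
  | zero => intro i; rfl
  | succ n ih => intro i; rw [blk_succ, sg_length, ih]; ring

theorem At_sg (l : List ℕ) : ∀ m, At l m ↔ At (sg l) (2 * m) ∧ True := by
  induction l with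
  | nil => intro m; simp [At, sg]
  | cons a l ih =>
    intro m
    have h1 := tm_even m
    have h2 := tm_odd m
    simp only [At, sg, ih, show 2 * (m + 1) = 2 * m + 1 + 1 by ring, h1, h2]
    constructor
    · rintro ⟨rfl, h⟩; exact ⟨⟨rfl, rfl, h.1⟩, trivial⟩
    · rintro ⟨⟨rfl, _, h⟩, _⟩; exact ⟨rfl, h, trivial⟩

theorem no_cube (m : ℕ) (h1 : tm m = tm (m + 1)) (h2 : tm (m + 1) = tm (m + 2)) : False := by
  rcases Nat.even_or_odd' m with ⟨q, rfl | rfl⟩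
  · have := tm_even q; have := tm_odd q; have := tm_lt q; omega
  · have := tm_even (q + 1); have := tm_odd (q + 1); have := tm_lt (q + 1)
    rw [show 2 * (q + 1) = 2 * q + 1 + 1 by ring] at *
    rw [show 2 * q + 1 + 1 + 1 = 2 * q + 1 + 2 by ring] at *
    omega

theorem no_five (m : ℕ) (h1 : tm m = tm (m + 2)) (h2 : tm (m + 2) = tm (m + 4))
    (h3 : tm (m + 1) = tm (m + 3)) : False := by
  rcases Nat.even_or_odd' m with ⟨q, rfl | rfl⟩
  · have a := tm_even q; have b := tm_even (q + 1); have c := tm_even (q + 2)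
    exact no_cube q (by rw [← a, ← b]; exact h1) (by rw [← b, ← c]; exact h2)
  · have a := tm_odd q; have b := tm_odd (q + 1); have c := tm_odd (q + 2)
    rw [show 2 * (q + 1) + 1 = 2 * q + 1 + 2 by ring] at b
    rw [show 2 * (q + 2) + 1 = 2 * q + 1 + 4 by ring] at c
    have := tm_lt q; have := tm_lt (q + 1); have := tm_lt (q + 2)
    exact no_cube q (by omega) (by omega)

theorem no_six (m : ℕ) (h1 : tm m = tm (m + 1)) (h2 : tm (m + 3) = tm (m + 4)) : False := by
  rcases Nat.even_or_odd' m with ⟨q, rfl | rfl⟩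
  · have := tm_even q; have := tm_odd q; have := tm_lt q; omega
  · have a := tm_even (q + 2); have b := tm_odd (q + 2); have := tm_lt (q + 2)
    rw [show 2 * (q + 2) = 2 * q + 1 + 3 by ring] at *
    rw [show 2 * q + 1 + 3 + 1 = 2 * q + 1 + 4 by ring] at *
    omega

theorem At_sg_even {v : List ℕ} (hv : 3 ≤ v.length) {p : ℕ} (h : At (sg v) p) :
    ∃ q, p = 2 * q ∧ At v q := by
  rcases Nat.even_or_odd' p with ⟨q, rfl | rfl⟩
  · exact ⟨q, rfl, (At_sg _ _).2 ⟨h, trivial⟩⟩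
  · exfalso
    match v, hv with
    | a :: b :: c :: l, _ =>
      simp only [sg, At] at h
      obtain ⟨h0, h1, h2, h3, h4, h5, _⟩ := h
      have e0 := tm_odd q
      have e1 := tm_even (q + 1)
      have e2 := tm_odd (q + 1)
      have e3 := tm_even (q + 2)
      have e4 := tm_odd (q + 2)
      have := tm_lt q; have := tm_lt (q + 1); have := tm_lt (q + 2)
      simp only [mul_add, mul_one, add_assoc, Nat.reduceAdd, Nat.reduceMul] at *
      exact no_cube q (by omega) (by omega)

theorem fac_sg {v : List ℕ} (h : IsFactor v) : IsFactor (sg v) := by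
  rw [isFactor_iff] at *
  obtain ⟨h0, m, hm⟩ := h
  refine ⟨?_, 2 * m, ((At_sg _ _).1 hm).1⟩
  cases v <;> simp_all [sg]

theorem fac_le {i : ℕ} {α : List ℕ} (h : IsFactor (i :: α)) : i < 2 := by
  obtain ⟨m, rfl, _⟩ := (fac_cons _ _).1 h
  exact tm_lt m

theorem fac_ext {v : List ℕ} (hv : 3 ≤ v.length) {i : ℕ} (hi : i < 2) :
    IsFactor (i :: sg v) ↔ IsFactor ((1 - i) :: v) := by
  constructor
  · intro h
    obtain ⟨m, h0, h⟩ := (fac_cons _ _).1 h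
    obtain ⟨q, hq, h'⟩ := At_sg_even hv h
    obtain ⟨q, rfl⟩ : ∃ r, q = r + 1 := ⟨q - 1, by omega⟩
    obtain rfl : m = 2 * q + 1 := by omega
    refine (fac_cons _ _).2 ⟨q, ?_, h'⟩
    have := tm_odd q; have := tm_lt q; omega
  · intro h
    have := fac_tail (fac_sg h) (by simp)
    rwa [show 1 - (1 - i) = i by omega] at this

theorem fac_force {v : List ℕ} (hv : 3 ≤ v.length) {i j : ℕ}
    (h : IsFactor (i :: j :: sg v)) : i = 1 - j ∧ j < 2 := by
  obtain ⟨m, h0, h1, h⟩ := (fac_cons _ _).1 h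
  obtain ⟨q, hq, h⟩ := At_sg_even hv h
  obtain ⟨q, rfl⟩ : ∃ r, q = r + 1 := ⟨q - 1, by omega⟩
  obtain rfl : m = 2 * q := by omega
  have := tm_odd q; have := tm_lt q; have := tm_even q; omega

theorem tm_vals : tm 1 = 1 ∧ tm 2 = 1 ∧ tm 3 = 0 ∧ tm 4 = 1 ∧ tm 5 = 0 ∧ tm 6 = 0 ∧ tm 7 = 1
    ∧ tm 8 = 1 ∧ tm 9 = 0 ∧ tm 10 = 0 ∧ tm 11 = 1 ∧ tm 12 = 0 ∧ tm 13 = 1 ∧ tm 14 = 1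
    ∧ tm 15 = 0 := by
  simp [tm]

theorem ex_four {b : ℕ} (hb : b < 2) : IsFactor [1 - b, 1 - b, b, 1 - b] := by
  have := tm_vals
  rw [isFactor_iff]
  refine ⟨by simp, ?_⟩
  interval_cases b
  · exact ⟨1, by simp [At, this]⟩
  · exact ⟨9, by simp [At, this]⟩

theorem ex_five {a b : ℕ} (ha : a < 2) (hb : b < 2) : IsFactor [a, b, 1 - b, 1 - b, b] := by
  have := tm_vals
  rw [isFactor_iff]
  refine ⟨by simp, ?_⟩
  interval_cases a <;> interval_cases b
  · exact ⟨5, by simp [At, this]⟩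
  · exact ⟨3, by simp [At, this]⟩
  · exact ⟨11, by simp [At, this]⟩
  · exact ⟨7, by simp [At, this]⟩

theorem phi_sg (φ : List ℕ → ℝ)
    (hφ3 : ∀ α : List ℕ, IsFactor α → α.length = 3 → φ α = 1 / 6)
    (hφ1 : ∀ (i : ℕ) (α : List ℕ), IsFactor (i :: α) → 3 ≤ α.length →
      ¬ IsFactor ((1 - i) :: α) → φ (i :: α) = φ α)
    (hφ2 : ∀ (i : ℕ) (α : List ℕ), IsFactor (i :: α) → 3 ≤ α.length →
      IsFactor ((1 - i) :: α) → φ (i :: α) = φ α / 2) (v : List ℕ) :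
    3 ≤ v.length → IsFactor v → φ (sg v) = φ v / 2 := by
  induction v with
  | nil => simp
  | cons i v ih =>
    intro hl hF
    have hi := fac_le hF
    by_cases hv : 3 ≤ v.length
    · have hFv : IsFactor v := fac_tail hF (by rintro rfl; simp at hv)
      have IH := ih hv hFv
      have h1 : IsFactor (i :: (1 - i) :: sg v) := fac_sg hF
      have h2 : IsFactor ((1 - i) :: sg v) := fac_tail h1 (by simp)
      have e1 : φ (sg (i :: v)) = φ ((1 - i) :: sg v) := by
        apply hφ1 _ _ h1
        · simp [sg_length]; omega
        · intro h
          have := (fac_force hv h).1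
          omega
      have e2 := fac_ext hv (i := 1 - (1 - i)) (by omega)
      rw [show 1 - (1 - (1 - i)) = 1 - i by omega] at e2
      rw [e1]
      by_cases hs : IsFactor ((1 - i) :: v)
      · rw [hφ2 _ _ hF hv hs, hφ2 _ _ h2 (by rw [sg_length]; omega) (e2.2 hs), IH]
      · rw [hφ1 _ _ hF hv hs, hφ1 _ _ h2 (by rw [sg_length]; omega) (fun h => hs (e2.1 h)), IH]
    · obtain ⟨b, c, rfl⟩ : ∃ b c, v = [b, c] :=
        List.length_eq_two.1 (by simp at hl; omega)
      · clear ih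
        have s6 : IsFactor [i, 1 - i, b, 1 - b, c, 1 - c] := fac_sg hF
        have s5 := fac_tail s6 (by simp)
        have s4 := fac_tail s5 (by simp)
        have s3 := fac_tail s4 (by simp)
        have hb := fac_le s4
        have hc := fac_le (fac_tail s3 (by simp))
        have p3 := hφ3 _ s3 rfl
        rw [hφ3 _ hF rfl]
        have n6 : ¬ IsFactor [1 - i, 1 - i, b, 1 - b, c, 1 - c] := by
          intro h
          obtain ⟨m, h0, h1, h2, h3, h4, h5, _⟩ := (fac_cons _ _).1 h
          by_cases hbc : b = c
          · have : i ≠ b := by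
              rintro rfl
              obtain ⟨m, h0, h1, h2, _⟩ := (fac_cons _ _).1 hF
              exact no_cube m (by omega) (by simp only [add_assoc, Nat.reduceAdd] at *; omega)
            exact no_cube m (by omega) (by simp only [add_assoc, Nat.reduceAdd] at *; omega)
          · exact no_six m (by omega) (by simp only [add_assoc, Nat.reduceAdd] at *; omega)
        have e6 := hφ1 _ _ s6 (by simp) n6
        change φ [i, 1 - i, b, 1 - b, c, 1 - c] = _
        rw [e6]
        by_cases hbc : b = c
        · subst hbc
          have hib : i = 1 - b := by
            by_contra hne
            obtain ⟨m, h0, h1, h2, _⟩ := (fac_cons _ _).1 hF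
            exact no_cube m (by omega) (by simp only [add_assoc, Nat.reduceAdd] at *; omega)
          have n5 : ¬ IsFactor [1 - (1 - i), b, 1 - b, b, 1 - b] := by
            intro h
            obtain ⟨m, h0, h1, h2, h3, h4, _⟩ := (fac_cons _ _).1 h
            simp only [add_assoc, Nat.reduceAdd] at *
            exact no_five m (by omega) (by omega) (by omega)
          rw [hφ1 _ _ s5 (by simp) n5, hφ2 _ _ s4 (by simp) (ex_four hb), p3]
        · obtain rfl : c = 1 - b := by omega
          have hbb : 1 - (1 - b) = b := by omega
          have n4 : ¬ IsFactor [1 - b, 1 - b, 1 - b, 1 - (1 - b)] := by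
            intro h
            obtain ⟨m, h0, h1, h2, _⟩ := (fac_cons _ _).1 h
            simp only [add_assoc, Nat.reduceAdd] at *
            exact no_cube m (by omega) (by omega)
          have y5 : IsFactor [1 - (1 - i), b, 1 - b, 1 - b, 1 - (1 - b)] := by
            have := ex_five (a := 1 - (1 - i)) (b := b) (by omega) hb
            rwa [hbb]
          rw [hφ2 _ _ s5 (by simp) y5, hφ1 _ _ s4 (by simp) n4, p3]

/-- The value of `φ` on any factor of the form `i₁⁽ⁿ⁾ i₂⁽ⁿ⁾ i₃⁽ⁿ⁾` is `1/(6·2ⁿ)`. -/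
theorem phi_on_three_blocks (φ : List ℕ → ℝ)
    (hφ3 : ∀ α : List ℕ, IsFactor α → α.length = 3 → φ α = 1 / 6)
    (hφ1 : ∀ (i : ℕ) (α : List ℕ), IsFactor (i :: α) → 3 ≤ α.length →
      ¬ IsFactor ((1 - i) :: α) → φ (i :: α) = φ α)
    (hφ2 : ∀ (i : ℕ) (α : List ℕ), IsFactor (i :: α) → 3 ≤ α.length →
      IsFactor ((1 - i) :: α) → φ (i :: α) = φ α / 2) :
    ∀ (n : ℕ) (i₁ i₂ i₃ : ℕ), (i₁ = 0 ∨ i₁ = 1) → (i₂ = 0 ∨ i₂ = 1) → (i₃ = 0 ∨ i₃ = 1) →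
      IsFactor (blk i₁ n ++ blk i₂ n ++ blk i₃ n) →
      φ (blk i₁ n ++ blk i₂ n ++ blk i₃ n) = 1 / (6 * 2 ^ n) := by
  intro n
  induction n with
  | zero =>
    intro i₁ i₂ i₃ _ _ _ hF
    rw [hφ3 _ hF rfl]; norm_num
  | succ n ih =>
    intro i₁ i₂ i₃ h₁ h₂ h₃ hF
    have hl : 3 ≤ (blk i₁ n ++ blk i₂ n ++ blk i₃ n).length := by
      have : 0 < 2 ^ n := by positivity
      simp only [List.length_append, blk_length]; omega
    rw [blk_succ, blk_succ, blk_succ, ← sg_append, ← sg_append] at hF ⊢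
    have hF' : IsFactor (blk i₁ n ++ blk i₂ n ++ blk i₃ n) := by
      obtain ⟨_, m, hm⟩ := (isFactor_iff _).1 hF
      obtain ⟨q, _, hq⟩ := At_sg_even hl hm
      refine (isFactor_iff _).2 ⟨?_, q, hq⟩
      intro h0
      rw [h0] at hl
      simp at hl
    rw [phi_sg φ hφ3 hφ1 hφ2 _ hl hF', ih _ _ _ h₁ h₂ h₃ hF', pow_succ]
    field_simp
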